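/- Let (Γ, μ) be a finite measure space and let j : Γ × ℝ^d → ℝ satisfy: (H1) for every ξ ∈ ℝ^d the map x ↦ j(x, ξ) is measurable and j(·, 0) ∈ L¹(Γ, μ); (H2) for μ-a.e. x ∈ Γ the map ξ ↦ j(x, ξ) is locally Lipschitz on ℝ^d; (H3) there exist k₀, k₁ ≥ 0 such that for μ-a.e. x and all ξ ∈ ℝ^d, every η ∈ ∂j(x, ξ) satisfies |η| ≤ k₀ + k₁|ξ|. Then for every v ∈ L²(Γ, μ; ℝ^d) the integral J(v) := ∫_Γ j(x, v(x)) dμ(x) is finite, and the functional J : L²(Γ, μ; ℝ^d) → ℝ is locally Lipschitz. -/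

import Mathlib

open Filter Topology MeasureTheory
open scoped RealInnerProductSpace

/-- The Clarke generalized directional derivative of `f` at `x` in the direction `v`:
`f⁰(x; v) = limsup_{y → x, λ ↓ 0} (f (y + λ v) - f y) / λ`. -/
noncomputable def clarkeDeriv {X : Type*} [NormedAddCommGroup X] [NormedSpace ℝ X]
    (f : X → ℝ) (x v : X) : ℝ :=
  Filter.limsup (fun p : X × ℝ => (f (p.1 + p.2 • v) - f p.1) / p.2)
    ((𝓝 x) ×ˢ (𝓝[>] (0 : ℝ)))

/-- The Clarke subdifferential of `f` at `x`, identified with a subset of the space itself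
via the inner product: `∂f(x) = {η : ⟪η, v⟫ ≤ f⁰(x; v) for all v}`. -/
def clarkeSubdiffInner {X : Type*} [NormedAddCommGroup X] [InnerProductSpace ℝ X]
    (f : X → ℝ) (x : X) : Set X :=
  {η | ∀ v : X, ⟪η, v⟫ ≤ clarkeDeriv f x v}

/-! The Clarke derivative `f⁰(x; ·)` of a locally Lipschitz function is sublinear, so by Hahn–Banach
and Riesz it is the support function of the subdifferential; a bound `M` on the subdifferential is
therefore a bound `f⁰(x; v) ≤ M ‖v‖`. Along a segment `f⁰` dominates the right upper slopes of `f`,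
whence `|f b - f a| ≤ M ‖b - a‖` with `M` a bound for the subdifferentials on `[a, b]`. Under the
growth condition this reads
`|j(x, a) - j(x, b)| ≤ (k₀ + k₁ (‖a‖ + ‖b‖)) ‖a - b‖`,
and Cauchy–Schwarz turns it into a Lipschitz estimate on bounded subsets of `L²`. -/

section ClarkeDeriv

/-- The filter `y → x, λ ↓ 0` on pairs `(y, λ)`, along which the Clarke derivative at `x` is an
upper limit. -/
abbrev clarkeFilter {X : Type*} [TopologicalSpace X] (x : X) : Filter (X × ℝ) :=
  𝓝 x ×ˢ 𝓝[>] (0 : ℝ)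

lemma eventually_clarkeFilter_snd_pos {X : Type*} [TopologicalSpace X] (x : X) :
    ∀ᶠ p in clarkeFilter x, 0 < p.2 :=
  tendsto_snd.eventually self_mem_nhdsWithin

variable {X : Type*} [NormedAddCommGroup X] [NormedSpace ℝ X] {f : X → ℝ} {x : X} {K : NNReal}
  {t : Set X}

/-- The difference quotient of `f` in the direction `v` with base point `p.1` and step `p.2`, whose
upper limit along `clarkeFilter x` is `clarkeDeriv f x v`. -/
noncomputable abbrev clarkeQuotient (f : X → ℝ) (v : X) (p : X × ℝ) : ℝ :=
  (f (p.1 + p.2 • v) - f p.1) / p.2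

lemma tendsto_add_smul_clarkeFilter (x v : X) :
    Tendsto (fun p : X × ℝ => p.1 + p.2 • v) (clarkeFilter x) (𝓝 x) := by
  have hsnd : Tendsto Prod.snd (clarkeFilter x) (𝓝 (0 : ℝ)) :=
    tendsto_snd.mono_right nhdsWithin_le_nhds
  simpa using tendsto_fst.add (hsnd.smul_const v)

lemma eventually_abs_clarkeQuotient_le (ht : t ∈ 𝓝 x) (hf : LipschitzOnWith K f t) (v : X) :
    ∀ᶠ p in clarkeFilter x, |clarkeQuotient f v p| ≤ K * ‖v‖ := by
  filter_upwards [tendsto_add_smul_clarkeFilter x v ht, tendsto_fst ht,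
    eventually_clarkeFilter_snd_pos x] with p hend hstart hpos
  rw [abs_div, abs_of_pos hpos, div_le_iff₀ hpos]
  calc |f (p.1 + p.2 • v) - f p.1| ≤ K * ‖p.1 + p.2 • v - p.1‖ := hf.norm_sub_le hend hstart
    _ = K * ‖v‖ * p.2 := by
      rw [add_sub_cancel_left, norm_smul, Real.norm_of_nonneg hpos.le]; ring

lemma isBoundedUnder_le_clarkeQuotient (ht : t ∈ 𝓝 x) (hf : LipschitzOnWith K f t) (v : X) :
    IsBoundedUnder (· ≤ ·) (clarkeFilter x) (clarkeQuotient f v) :=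
  isBoundedUnder_of_eventually_le
    ((eventually_abs_clarkeQuotient_le ht hf v).mono fun _ hp => (abs_le.1 hp).2)

lemma isCoboundedUnder_le_clarkeQuotient (ht : t ∈ 𝓝 x) (hf : LipschitzOnWith K f t) (v : X) :
    IsCoboundedUnder (· ≤ ·) (clarkeFilter x) (clarkeQuotient f v) :=
  (isBoundedUnder_of_eventually_ge ((eventually_abs_clarkeQuotient_le ht hf v).mono
    fun _ hp => (abs_le.1 hp).1)).isCoboundedUnder_le

lemma eventually_clarkeQuotient_lt (ht : t ∈ 𝓝 x) (hf : LipschitzOnWith K f t) {v : X} {r : ℝ}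
    (hr : clarkeDeriv f x v < r) : ∀ᶠ p in clarkeFilter x, clarkeQuotient f v p < r :=
  eventually_lt_of_limsup_lt hr (isBoundedUnder_le_clarkeQuotient ht hf v)

lemma clarkeDeriv_le_of_eventually_le (ht : t ∈ 𝓝 x) (hf : LipschitzOnWith K f t) {v : X} {r : ℝ}
    (h : ∀ᶠ p in clarkeFilter x, clarkeQuotient f v p ≤ r) : clarkeDeriv f x v ≤ r :=
  limsup_le_of_le (isCoboundedUnder_le_clarkeQuotient ht hf v) h

lemma clarkeDeriv_le_mul_norm (ht : t ∈ 𝓝 x) (hf : LipschitzOnWith K f t) (v : X) :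
    clarkeDeriv f x v ≤ K * ‖v‖ :=
  clarkeDeriv_le_of_eventually_le ht hf
    ((eventually_abs_clarkeQuotient_le ht hf v).mono fun _ hp => (abs_le.1 hp).2)

lemma clarkeDeriv_add_le (ht : t ∈ 𝓝 x) (hf : LipschitzOnWith K f t) (v w : X) :
    clarkeDeriv f x (v + w) ≤ clarkeDeriv f x v + clarkeDeriv f x w := by
  refine le_of_forall_pos_le_add fun ε hε => clarkeDeriv_le_of_eventually_le ht hf ?_
  have hshift : Tendsto (fun p : X × ℝ => (p.1 + p.2 • v, p.2)) (clarkeFilter x) (clarkeFilter x) :=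
    (tendsto_add_smul_clarkeFilter x v).prodMk tendsto_snd
  have hv := eventually_clarkeQuotient_lt ht hf
    (lt_add_of_pos_right (clarkeDeriv f x v) (half_pos hε))
  have hw := eventually_clarkeQuotient_lt ht hf
    (lt_add_of_pos_right (clarkeDeriv f x w) (half_pos hε))
  filter_upwards [hv, hshift.eventually hw] with p hpv hpw
  have hsplit : clarkeQuotient f (v + w) p =
      clarkeQuotient f v p + clarkeQuotient f w (p.1 + p.2 • v, p.2) := by
    simp only [clarkeQuotient, smul_add, ← add_assoc]
    ring
  linarith

lemma clarkeDeriv_smul_le (ht : t ∈ 𝓝 x) (hf : LipschitzOnWith K f t) {c : ℝ} (hc : 0 < c) (v : X) :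
    clarkeDeriv f x (c • v) ≤ c * clarkeDeriv f x v := by
  rw [← div_le_iff₀' hc]
  refine le_of_forall_gt_imp_ge_of_dense fun r hr => ?_
  rw [div_le_iff₀' hc]
  refine clarkeDeriv_le_of_eventually_le ht hf ?_
  have hscale : Tendsto (fun p : X × ℝ => (p.1, c * p.2)) (clarkeFilter x) (clarkeFilter x) :=
    tendsto_fst.prodMk ((tendsto_iff_comap.2 (comap_mulLeft_nhdsGT_zero hc).ge).comp tendsto_snd)
  filter_upwards [hscale.eventually (eventually_clarkeQuotient_lt ht hf hr)] with p hp
  have hquot : clarkeQuotient f (c • v) p = c * clarkeQuotient f v (p.1, c * p.2) := by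
    simp only [clarkeQuotient, smul_smul, mul_comm p.2 c]
    field_simp
  rw [hquot]
  gcongr

lemma clarkeDeriv_smul (ht : t ∈ 𝓝 x) (hf : LipschitzOnWith K f t) {c : ℝ} (hc : 0 < c) (v : X) :
    clarkeDeriv f x (c • v) = c * clarkeDeriv f x v := by
  refine (clarkeDeriv_smul_le ht hf hc v).antisymm ?_
  have hinv := clarkeDeriv_smul_le ht hf (inv_pos.2 hc) (c • v)
  rwa [inv_smul_smul₀ hc.ne', le_inv_mul_iff₀ hc] at hinv

lemma eventually_slope_lt_of_clarkeDeriv_lt {a v : X} {s r : ℝ} (ht : t ∈ 𝓝 (a + s • v))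
    (hf : LipschitzOnWith K f t) (hr : clarkeDeriv f (a + s • v) v < r) :
    ∀ᶠ z in 𝓝[>] s, slope (fun z => f (a + z • v)) s z < r := by
  have hstep : Tendsto (fun z : ℝ => z - s) (𝓝[>] s) (𝓝[>] 0) := by
    simpa only [Tendsto, sub_eq_add_neg, add_neg_cancel] using
      (Filter.map_add_right_nhdsGT (c := -s) (a := s)).le
  have hpath : Tendsto (fun z : ℝ => (a + s • v, z - s)) (𝓝[>] s) (clarkeFilter (a + s • v)) :=
    tendsto_const_nhds.prodMk hstep
  filter_upwards [hpath.eventually (eventually_clarkeQuotient_lt ht hf hr)] with z hz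
  rw [slope_def_field]
  convert hz using 4
  module

lemma sub_le_of_clarkeDeriv_le {a b : X} {C : ℝ} (hf : LocallyLipschitz f)
    (hC : ∀ z ∈ segment ℝ a b, clarkeDeriv f z (b - a) ≤ C) : f b - f a ≤ C := by
  have hpath : Continuous fun s : ℝ => f (a + s • (b - a)) := by
    have := hf.continuous
    fun_prop
  have hslope : ∀ s ∈ Set.Ico (0 : ℝ) 1, ∀ r, C < r →
      ∃ᶠ z in 𝓝[>] s, slope (fun s => f (a + s • (b - a))) s z < r := by
    intro s hs r hr
    obtain ⟨K, t, ht, hK⟩ := hf (a + s • (b - a))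
    have hmem : a + s • (b - a) ∈ segment ℝ a b :=
      segment_eq_image' ℝ a b ▸ ⟨s, Set.Ico_subset_Icc_self hs, rfl⟩
    exact (eventually_slope_lt_of_clarkeDeriv_lt ht hK ((hC _ hmem).trans_lt hr)).frequently
  have hline : f (a + (1 : ℝ) • (b - a)) ≤ f a + 1 * C :=
    image_le_of_liminf_slope_right_le_deriv_boundary (B := fun s => f a + s * C) (B' := fun _ => C)
      hpath.continuousOn (by simp) (by fun_prop)
      (fun s _ => ((hasDerivAt_mul_const C).const_add (f a)).hasDerivWithinAt)
      hslope (Set.right_mem_Icc.2 zero_le_one)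
  rw [one_smul, one_mul, add_sub_cancel] at hline
  linarith

end ClarkeDeriv

section Sublinear

variable {E : Type*} [AddCommGroup E] [Module ℝ E] {N : E → ℝ}

lemma map_zero_of_pos_homogeneous (N_hom : ∀ c : ℝ, 0 < c → ∀ x, N (c • x) = c * N x) :
    N 0 = 0 := by
  have hdouble := N_hom 2 two_pos 0
  rw [smul_zero] at hdouble
  linarith

lemma mul_le_map_smul_of_sublinear (N_hom : ∀ c : ℝ, 0 < c → ∀ x, N (c • x) = c * N x)
    (N_add : ∀ x y, N (x + y) ≤ N x + N y) (c : ℝ) (v : E) : c * N v ≤ N (c • v) := by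
  have N_zero : N 0 = 0 := map_zero_of_pos_homogeneous N_hom
  rcases lt_trichotomy c 0 with hc | rfl | hc
  · have hadd := N_add (c • v) (-c • v)
    rw [neg_smul, add_neg_cancel, N_zero, ← neg_smul, N_hom (-c) (neg_pos.2 hc)] at hadd
    linarith
  · simp [N_zero]
  · exact (N_hom c hc v).ge

lemma exists_linearMap_le_sublinear_apply_eq
    (N_hom : ∀ c : ℝ, 0 < c → ∀ x, N (c • x) = c * N x)
    (N_add : ∀ x y, N (x + y) ≤ N x + N y) (v : E) :
    ∃ g : E →ₗ[ℝ] ℝ, g v = N v ∧ ∀ w, g w ≤ N w := by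
  have hwell : ∀ c : ℝ, c • v = 0 → RingHom.id ℝ c • N v = 0 := by
    intro c hc
    rcases smul_eq_zero.1 hc with rfl | rfl
    · simp
    · simp [map_zero_of_pos_homogeneous N_hom]
  obtain ⟨g, hg_ext, hg_le⟩ := exists_extension_of_le_sublinear
    (LinearPMap.mkSpanSingleton' v (N v) hwell) N N_hom N_add (by
      rintro ⟨_, hw⟩
      obtain ⟨c, rfl⟩ := Submodule.mem_span_singleton.1 hw
      rw [LinearPMap.mkSpanSingleton'_apply]
      exact mul_le_map_smul_of_sublinear N_hom N_add c v)
  refine ⟨g, ?_, hg_le⟩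
  exact (hg_ext ⟨v, Submodule.mem_span_singleton_self v⟩).trans
    (LinearPMap.mkSpanSingleton'_apply_self _ _ _ _)

end Sublinear

lemma abs_linearMap_apply_le_of_le {E : Type*} [SeminormedAddCommGroup E] [Module ℝ E]
    (g : E →ₗ[ℝ] ℝ) {C : ℝ} (hg : ∀ w, g w ≤ C * ‖w‖) (w : E) : |g w| ≤ C * ‖w‖ := by
  have hneg := hg (-w)
  rw [map_neg, norm_neg] at hneg
  exact abs_le.2 ⟨by linarith, hg w⟩

section ClarkeSubdiff

variable {X : Type*} [NormedAddCommGroup X] [InnerProductSpace ℝ X] [CompleteSpace X] {f : X → ℝ}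

lemma exists_mem_clarkeSubdiffInner_inner_eq {x : X} {K : NNReal} {t : Set X} (ht : t ∈ 𝓝 x)
    (hf : LipschitzOnWith K f t) (v : X) :
    ∃ η ∈ clarkeSubdiffInner f x, ⟪η, v⟫ = clarkeDeriv f x v := by
  obtain ⟨g, hgv, hg⟩ := exists_linearMap_le_sublinear_apply_eq
    (fun c hc => clarkeDeriv_smul ht hf hc) (clarkeDeriv_add_le ht hf) v
  have hg_abs := abs_linearMap_apply_le_of_le g fun w =>
    (hg w).trans (clarkeDeriv_le_mul_norm ht hf w)
  have hriesz : ∀ w, ⟪(InnerProductSpace.toDual ℝ X).symm (g.mkContinuous K hg_abs), w⟫ = g w :=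
    fun w => InnerProductSpace.toDual_symm_apply
  exact ⟨_, fun w => (hriesz w).trans_le (hg w), (hriesz v).trans hgv⟩

lemma clarkeDeriv_le_of_norm_clarkeSubdiffInner_le {x : X} {K : NNReal} {t : Set X} (ht : t ∈ 𝓝 x)
    (hf : LipschitzOnWith K f t) {M : ℝ} (hM : ∀ η ∈ clarkeSubdiffInner f x, ‖η‖ ≤ M) (v : X) :
    clarkeDeriv f x v ≤ M * ‖v‖ := by
  obtain ⟨η, hη, hηv⟩ := exists_mem_clarkeSubdiffInner_inner_eq ht hf v
  calc clarkeDeriv f x v = ⟪η, v⟫ := hηv.symm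
    _ ≤ ‖η‖ * ‖v‖ := real_inner_le_norm η v
    _ ≤ M * ‖v‖ := by gcongr; exact hM η hη

lemma sub_le_of_norm_clarkeSubdiffInner_le (hf : LocallyLipschitz f) {a b : X} {M : ℝ}
    (hM : ∀ z ∈ segment ℝ a b, ∀ η ∈ clarkeSubdiffInner f z, ‖η‖ ≤ M) :
    f b - f a ≤ M * ‖b - a‖ := by
  refine sub_le_of_clarkeDeriv_le hf fun z hz => ?_
  obtain ⟨K, t, ht, hK⟩ := hf z
  exact clarkeDeriv_le_of_norm_clarkeSubdiffInner_le ht hK (hM z hz) (b - a)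

lemma abs_sub_le_of_norm_clarkeSubdiffInner_le (hf : LocallyLipschitz f) {a b : X} {M : ℝ}
    (hM : ∀ z ∈ segment ℝ a b, ∀ η ∈ clarkeSubdiffInner f z, ‖η‖ ≤ M) :
    |f a - f b| ≤ M * ‖a - b‖ := by
  refine abs_sub_le_iff.2 ⟨?_, ?_⟩
  · exact sub_le_of_norm_clarkeSubdiffInner_le hf (segment_symm ℝ a b ▸ hM)
  · exact norm_sub_rev a b ▸ sub_le_of_norm_clarkeSubdiffInner_le hf hM

lemma abs_sub_le_of_clarkeSubdiffInner_growth (hf : LocallyLipschitz f) {k₀ k₁ : ℝ} (hk₁ : 0 ≤ k₁)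
    (hgrowth : ∀ ξ, ∀ η ∈ clarkeSubdiffInner f ξ, ‖η‖ ≤ k₀ + k₁ * ‖ξ‖) (a b : X) :
    |f a - f b| ≤ (k₀ + k₁ * (‖a‖ + ‖b‖)) * ‖a - b‖ := by
  refine abs_sub_le_of_norm_clarkeSubdiffInner_le hf fun z hz η hη => ?_
  have hz_norm : ‖z‖ ≤ ‖a‖ + ‖b‖ :=
    (convexOn_univ_norm.le_on_segment trivial trivial hz).trans
      (max_le_add_of_nonneg (norm_nonneg a) (norm_nonneg b))
  exact (hgrowth z η hη).trans (by gcongr)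

end ClarkeSubdiff

section Caratheodory

variable {Γ E F : Type*} [MeasurableSpace Γ] {μ : Measure Γ} [TopologicalSpace F]
  [TopologicalSpace.PseudoMetrizableSpace F] {j : Γ → E → F}

lemma aestronglyMeasurable_apply_simpleFunc (hj : ∀ ξ, AEStronglyMeasurable (fun x => j x ξ) μ)
    (s : SimpleFunc Γ E) : AEStronglyMeasurable (fun x => j x (s x)) μ := by
  have hcover : ⋃ ξ : s.range, s ⁻¹' {(ξ : E)} = Set.univ :=
    Set.eq_univ_of_forall fun x => Set.mem_iUnion.2 ⟨⟨s x, s.mem_range_self x⟩, rfl⟩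
  rw [← Measure.restrict_univ (μ := μ), ← hcover, aestronglyMeasurable_iUnion_iff]
  refine fun ξ => (hj ξ).restrict.congr ?_
  filter_upwards [ae_restrict_mem (s.measurableSet_fiber ξ)] with x hx
  rw [Set.mem_preimage.1 hx]

lemma aestronglyMeasurable_apply_of_caratheodory [TopologicalSpace E]
    (hj : ∀ ξ, AEStronglyMeasurable (fun x => j x ξ) μ) (hcont : ∀ᵐ x ∂μ, Continuous (j x))
    {v : Γ → E} (hv : AEStronglyMeasurable v μ) : AEStronglyMeasurable (fun x => j x (v x)) μ := by
  have hmk := hv.stronglyMeasurable_mk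
  refine aestronglyMeasurable_of_tendsto_ae atTop
    (fun n => aestronglyMeasurable_apply_simpleFunc hj (hmk.approx n)) ?_
  filter_upwards [hcont, hv.ae_eq_mk] with x hx hvx
  rw [hvx]
  exact (hx.tendsto _).comp (hmk.tendsto_approx x)

end Caratheodory

lemma locallyLipschitz_of_norm_sub_le {E F : Type*} [SeminormedAddCommGroup E]
    [SeminormedAddCommGroup F] {J : E → F} {A B : ℝ} (hB : 0 ≤ B)
    (hJ : ∀ u v, ‖J u - J v‖ ≤ (A + B * (‖u‖ + ‖v‖)) * ‖u - v‖) : LocallyLipschitz J := by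
  intro w
  have hball : ∀ z ∈ Metric.ball w 1, ‖z‖ ≤ ‖w‖ + 1 := fun z hz =>
    (norm_lt_of_mem_ball hz).le
  refine ⟨(A + B * (‖w‖ + 1 + (‖w‖ + 1))).toNNReal, Metric.ball w 1,
    Metric.ball_mem_nhds w one_pos, LipschitzOnWith.of_dist_le_mul fun u hu v hv => ?_⟩
  rw [dist_eq_norm, dist_eq_norm]
  calc ‖J u - J v‖ ≤ (A + B * (‖u‖ + ‖v‖)) * ‖u - v‖ := hJ u v
    _ ≤ (A + B * (‖w‖ + 1 + (‖w‖ + 1))) * ‖u - v‖ := by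
      gcongr
      exacts [hball u hu, hball v hv]
    _ ≤ _ := by gcongr; exact Real.le_coe_toNNReal _

section Nemytskii

variable {Γ E F : Type*} [MeasurableSpace Γ] {μ : Measure Γ} [NormedAddCommGroup E]
  [NormedAddCommGroup F]

lemma integral_mul_le_lpNorm_mul_lpNorm {p q : ENNReal} [p.HolderConjugate q] {f g : Γ → ℝ}
    (hf : MemLp f p μ) (hg : MemLp g q μ) :
    ∫ x, f x * g x ∂μ ≤ lpNorm f p μ * lpNorm g q μ := by
  have hfg : AEStronglyMeasurable (f • g) μ := hf.1.smul hg.1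
  calc ∫ x, f x * g x ∂μ ≤ ∫ x, ‖f x * g x‖ ∂μ :=
        (Real.le_norm_self _).trans (norm_integral_le_integral_norm fun x => f x * g x)
    _ = (eLpNorm (f • g) 1 μ).toReal := by
        rw [toReal_eLpNorm hfg, lpNorm_one_eq_integral_norm hfg]; rfl
    _ ≤ (eLpNorm f p μ * eLpNorm g q μ).toReal :=
        ENNReal.toReal_mono (ENNReal.mul_ne_top hf.2.ne hg.2.ne)
          (eLpNorm_smul_le_mul_eLpNorm hg.1 hf.1)
    _ = lpNorm f p μ * lpNorm g q μ := by
        rw [ENNReal.toReal_mul, toReal_eLpNorm hf.1, toReal_eLpNorm hg.1]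

lemma lpNorm_coeFn_eq_norm {p : ENNReal} (u : Lp E p μ) : lpNorm u p μ = ‖u‖ := by
  rw [Lp.norm_def, toReal_eLpNorm (Lp.aestronglyMeasurable u)]

lemma lpNorm_norm_sub_eq_norm_sub {p : ENNReal} (u v : Lp E p μ) :
    lpNorm (fun x => ‖u x - v x‖) p μ = ‖u - v‖ := by
  have hsub := ((Lp.memLp u).sub (Lp.memLp v)).1
  calc lpNorm (fun x => ‖u x - v x‖) p μ = (eLpNorm (⇑u - ⇑v) p μ).toReal := by
        rw [toReal_eLpNorm hsub, ← lpNorm_norm hsub]; rfl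
    _ = ‖u - v‖ := by rw [Lp.norm_def, eLpNorm_congr_ae (Lp.coeFn_sub u v)]

variable {j : Γ → E → F} {k : Γ → ℝ}

lemma memLp_add_mul_norm_add_norm {p : ENNReal} (hk : MemLp k p μ) (c : ℝ) (u v : Lp E p μ) :
    MemLp (fun x => k x + c * (‖u x‖ + ‖v x‖)) p μ :=
  hk.add (((Lp.memLp u).norm.add (Lp.memLp v).norm).const_mul c)

lemma lpNorm_add_mul_norm_add_norm_le {p : ENNReal} {c : ℝ} (hp : 1 ≤ p) (hk : MemLp k p μ)
    (hc : 0 ≤ c) (u v : Lp E p μ) :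
    lpNorm (fun x => k x + c * (‖u x‖ + ‖v x‖)) p μ ≤ lpNorm k p μ + c * (‖u‖ + ‖v‖) := by
  have hu := (Lp.memLp u).norm
  calc lpNorm (fun x => k x + c * (‖u x‖ + ‖v x‖)) p μ
      ≤ lpNorm k p μ + lpNorm (c • ((fun x => ‖u x‖) + fun x => ‖v x‖)) p μ := lpNorm_add_le hk hp
    _ = lpNorm k p μ + c * lpNorm ((fun x => ‖u x‖) + fun x => ‖v x‖) p μ := by
        rw [lpNorm_const_smul, coe_nnnorm, Real.norm_of_nonneg hc]
    _ ≤ lpNorm k p μ + c * (lpNorm (fun x => ‖u x‖) p μ + lpNorm (fun x => ‖v x‖) p μ) := by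
        gcongr
        exact lpNorm_add_le hu hp
    _ = lpNorm k p μ + c * (‖u‖ + ‖v‖) := by
        rw [lpNorm_norm (Lp.aestronglyMeasurable u), lpNorm_norm (Lp.aestronglyMeasurable v),
          lpNorm_coeFn_eq_norm, lpNorm_coeFn_eq_norm]

lemma integrable_add_mul_norm_add_norm_mul_norm_sub (hk : MemLp k 2 μ) (c : ℝ) (u v : Lp E 2 μ) :
    Integrable (fun x => (k x + c * (‖u x‖ + ‖v x‖)) * ‖u x - v x‖) μ :=
  (memLp_add_mul_norm_add_norm hk c u v).integrable_mul ((Lp.memLp u).sub (Lp.memLp v)).norm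

lemma integral_add_mul_norm_add_norm_mul_norm_sub_le {c : ℝ} (hk : MemLp k 2 μ)
    (hc : 0 ≤ c) (u v : Lp E 2 μ) :
    ∫ x, (k x + c * (‖u x‖ + ‖v x‖)) * ‖u x - v x‖ ∂μ ≤
      (lpNorm k 2 μ + c * (‖u‖ + ‖v‖)) * ‖u - v‖ := by
  have hw := memLp_add_mul_norm_add_norm hk c u v
  have hsub := (Lp.memLp u).sub (Lp.memLp v)
  calc ∫ x, (k x + c * (‖u x‖ + ‖v x‖)) * ‖u x - v x‖ ∂μ
      ≤ lpNorm (fun x => k x + c * (‖u x‖ + ‖v x‖)) 2 μ * lpNorm (fun x => ‖u x - v x‖) 2 μ :=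
        integral_mul_le_lpNorm_mul_lpNorm hw hsub.norm
    _ ≤ (lpNorm k 2 μ + c * (‖u‖ + ‖v‖)) * ‖u - v‖ := by
        rw [lpNorm_norm_sub_eq_norm_sub]
        gcongr
        exact lpNorm_add_mul_norm_add_norm_le one_le_two hk hc u v

lemma integrable_apply_Lp {c : ℝ} (hint0 : Integrable (fun x => j x 0) μ) (hk : MemLp k 2 μ)
    (hj : ∀ᵐ x ∂μ, ∀ a b, ‖j x a - j x b‖ ≤ (k x + c * (‖a‖ + ‖b‖)) * ‖a - b‖) (v : Lp E 2 μ)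
    (hv : AEStronglyMeasurable (fun x => j x (v x)) μ) : Integrable (fun x => j x (v x)) μ := by
  have hdiff : Integrable (fun x => j x (v x) - j x 0) μ := by
    refine (integrable_add_mul_norm_add_norm_mul_norm_sub hk c v 0).mono' (hv.sub hint0.1) ?_
    filter_upwards [hj, Lp.coeFn_zero E 2 μ] with x hx h0
    rw [h0]
    exact hx (v x) 0
  simpa only [Pi.add_def, sub_add_cancel] using hdiff.add hint0

lemma norm_integral_apply_sub_le [NormedSpace ℝ F] {c : ℝ} (hk : MemLp k 2 μ) (hc : 0 ≤ c)
    (hj : ∀ᵐ x ∂μ, ∀ a b, ‖j x a - j x b‖ ≤ (k x + c * (‖a‖ + ‖b‖)) * ‖a - b‖) {u v : Lp E 2 μ}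
    (hu : Integrable (fun x => j x (u x)) μ) (hv : Integrable (fun x => j x (v x)) μ) :
    ‖∫ x, j x (u x) ∂μ - ∫ x, j x (v x) ∂μ‖ ≤
      (lpNorm k 2 μ + c * (‖u‖ + ‖v‖)) * ‖u - v‖ := by
  rw [← integral_sub hu hv]
  refine (norm_integral_le_of_norm_le (integrable_add_mul_norm_add_norm_mul_norm_sub hk c u v)
    (hj.mono fun x hx => hx (u x) (v x))).trans ?_
  exact integral_add_mul_norm_add_norm_mul_norm_sub_le hk hc u v

end Nemytskii

theorem integral_functional_locallyLipschitz_general {X : Type*} [NormedAddCommGroup X]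
    [InnerProductSpace ℝ X] [CompleteSpace X] {Γ : Type*} [MeasurableSpace Γ] {μ : Measure Γ}
    {j : Γ → X → ℝ} (hmeas : ∀ ξ, AEStronglyMeasurable (fun x => j x ξ) μ)
    (hint0 : Integrable (fun x => j x 0) μ) (hlip : ∀ᵐ x ∂μ, LocallyLipschitz (j x))
    {k₀ : Γ → ℝ} {k₁ : ℝ} (hk₀ : MemLp k₀ 2 μ) (hk₁ : 0 ≤ k₁)
    (hgrowth : ∀ᵐ x ∂μ, ∀ ξ, ∀ η ∈ clarkeSubdiffInner (j x) ξ, ‖η‖ ≤ k₀ x + k₁ * ‖ξ‖) :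
    (∀ v : Lp X 2 μ, Integrable (fun x => j x (v x)) μ) ∧
      LocallyLipschitz (fun v : Lp X 2 μ => ∫ x, j x (v x) ∂μ) := by
  have hbound : ∀ᵐ x ∂μ, ∀ a b, ‖j x a - j x b‖ ≤ (k₀ x + k₁ * (‖a‖ + ‖b‖)) * ‖a - b‖ := by
    filter_upwards [hlip, hgrowth] with x hx_lip hx_growth
    exact abs_sub_le_of_clarkeSubdiffInner_growth hx_lip hk₁ hx_growth
  have hint : ∀ v : Lp X 2 μ, Integrable (fun x => j x (v x)) μ := fun v =>
    integrable_apply_Lp hint0 hk₀ hbound v <| aestronglyMeasurable_apply_of_caratheodory hmeas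
      (hlip.mono fun _ hx => hx.continuous) (Lp.aestronglyMeasurable v)
  exact ⟨hint, locallyLipschitz_of_norm_sub_le hk₁ fun u v =>
    norm_integral_apply_sub_le hk₀ hk₁ hbound (hint u) (hint v)⟩

/-- Under (H1)–(H3), the functional `J(v) = ∫ j(x, v(x)) dμ` is well defined (the integrand
is integrable for every `v ∈ L²(Γ, μ; ℝ^d)`) and `J` is locally Lipschitz on
`L²(Γ, μ; ℝ^d)`. -/
theorem integral_functional_locallyLipschitz {d : ℕ}
    {Γ : Type*} [MeasurableSpace Γ] (μ : Measure Γ) [IsFiniteMeasure μ]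
    (j : Γ → EuclideanSpace ℝ (Fin d) → ℝ)
    (hmeas : ∀ ξ : EuclideanSpace ℝ (Fin d), Measurable (fun x => j x ξ))
    (hint0 : Integrable (fun x => j x 0) μ)
    (hlip : ∀ᵐ x ∂μ, LocallyLipschitz (j x))
    (k₀ k₁ : ℝ) (hk₀ : 0 ≤ k₀) (hk₁ : 0 ≤ k₁)
    (hgrowth : ∀ᵐ x ∂μ, ∀ ξ : EuclideanSpace ℝ (Fin d),
      ∀ η ∈ clarkeSubdiffInner (j x) ξ, ‖η‖ ≤ k₀ + k₁ * ‖ξ‖) :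
    (∀ v : Lp (EuclideanSpace ℝ (Fin d)) 2 μ, Integrable (fun x => j x (v x)) μ) ∧
    LocallyLipschitz
      (fun v : Lp (EuclideanSpace ℝ (Fin d)) 2 μ => ∫ x, j x (v x) ∂μ) :=
  integral_functional_locallyLipschitz_general (fun ξ => (hmeas ξ).aestronglyMeasurable) hint0 hlip
    (memLp_const k₀) hk₁ hgrowth
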